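/- arXiv:1205.6727 — 2 statements merged into one kernel-verified Lean document; each statement's English description precedes it below -/
import Mathlib

section
/- Assume there exists a feasible flow with the same pattern as A'. Consider the exact cyclic coordinate descent sequence for the minimization of θ over (p, μ, a, b) ∈ ℝ^{n+1} × ℝ³: cyclically, each coordinate p_l for l ≤ n is updated to p_l = (1/2)·(log(Σ_{i=1}^n A_{il} e^{p_i} + e^{a + p_{n+1}}) − log(Σ_{j=1}^n A_{lj} e^{−p_j} + e^{−b − p_{n+1}})), the coordinate p_{n+1} is updated to p_{n+1} = (1/2)·(log(Σ_{i=1}^n e^{−b + p_i}) − log(Σ_{j=1}^n e^{a − p_j})), and the multipliers (μ, a, b) are updated to λ(p) (each of these updates is the exact minimization of θ over the corresponding coordinate, the other coordinates being held fixed). Then the sequence of iterates converges at least linearly to a global minimizer of θ. -/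
open BigOperators Filter

/-- The effective HOTS dual function. -/
noncomputable def effDual {n : ℕ} (A : Matrix (Fin n) (Fin n) ℝ) (α : ℝ)
    (p : Fin (n + 1) → ℝ) (μ a b : ℝ) : ℝ :=
  (∑ i : Fin n, ∑ j : Fin n, A i j * Real.exp (p i.castSucc - p j.castSucc + μ))
    + (∑ i : Fin n, Real.exp (-b - p (Fin.last n) + p i.castSucc + μ))
    + (∑ j : Fin n, Real.exp (a + p (Fin.last n) - p j.castSucc + μ))
    - (1 - α) * a - μ + (1 - α) * b

/-- `σ(p) = Σ_{i,j} A_{ij} e^{p_i − p_j}`. -/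
noncomputable def sigmaP {n : ℕ} (A : Matrix (Fin n) (Fin n) ℝ) (p : Fin (n + 1) → ℝ) : ℝ :=
  ∑ i : Fin n, ∑ j : Fin n, A i j * Real.exp (p i.castSucc - p j.castSucc)

/-- The optimal multipliers `λ(p) = (μ(p), a(p), b(p))`. -/
noncomputable def lamOpt {n : ℕ} (A : Matrix (Fin n) (Fin n) ℝ) (α : ℝ)
    (p : Fin (n + 1) → ℝ) : ℝ × ℝ × ℝ :=
  (Real.log ((2 * α - 1) / sigmaP A p),
   Real.log ((1 - α) / (2 * α - 1) * sigmaP A p /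
     ∑ j : Fin n, Real.exp (p (Fin.last n) - p j.castSucc)),
   -Real.log ((1 - α) / (2 * α - 1) * sigmaP A p /
     ∑ i : Fin n, Real.exp (p i.castSucc - p (Fin.last n))))

/-- The exact single-coordinate update of the coordinate `l` of `p`, the multipliers
`(a, b)` being fixed (for `l ≤ n` it is the HOTS coordinate update, for `l = n+1` it is the
update of the artificial coordinate). -/
noncomputable def coordUpdate {n : ℕ} (A : Matrix (Fin n) (Fin n) ℝ) (a b : ℝ)
    (p : Fin (n + 1) → ℝ) : Fin (n + 1) → ℝ :=
  Fin.lastCases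
    ((1 / 2) * (Real.log (∑ i : Fin n, Real.exp (-b + p i.castSucc))
      - Real.log (∑ j : Fin n, Real.exp (a - p j.castSucc))))
    (fun l => (1 / 2) *
      (Real.log ((∑ i : Fin n, A i l * Real.exp (p i.castSucc))
          + Real.exp (a + p (Fin.last n)))
        - Real.log ((∑ j : Fin n, A l j * Real.exp (-(p j.castSucc)))
          + Real.exp (-b - p (Fin.last n)))))

/-- The augmented `(n+1)×(n+1)` matrix `A'`. -/
def augMatrix {n : ℕ} (A : Matrix (Fin n) (Fin n) ℝ) :
    Matrix (Fin (n + 1)) (Fin (n + 1)) ℝ :=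
  fun i j =>
    if hi : (i : ℕ) < n then
      if hj : (j : ℕ) < n then A ⟨i, hi⟩ ⟨j, hj⟩ else 1
    else
      if (j : ℕ) < n then 1 else 0

/-- A feasible flow with the same pattern as `A'`. -/
def FeasibleFlow {n : ℕ} (A : Matrix (Fin n) (Fin n) ℝ) (α : ℝ)
    (ρ : Matrix (Fin (n + 1)) (Fin (n + 1)) ℝ) : Prop :=
  (∀ i j, 0 < augMatrix A i j → 0 < ρ i j) ∧
  (∀ i j, augMatrix A i j = 0 → ρ i j = 0) ∧
  (∑ i, ∑ j, ρ i j = 1) ∧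
  (∀ i, ∑ j, ρ i j = ∑ j, ρ j i) ∧
  (∑ j : Fin n, ρ (Fin.last n) j.castSucc = 1 - α) ∧
  (∑ i : Fin n, ρ i.castSucc (Fin.last n) = 1 - α)


theorem hots_abstract {E : Type*} [MetricSpace E] [CompleteSpace E] (N : ℕ) (hN : 0 < N)
    (x : ℕ → E) (θ : E → ℝ) (hθ : Continuous θ) (C1 C5 : ℝ) (hC1 : 0 ≤ C1)
    (hmono : ∀ k, θ (x (k + 1)) ≤ θ (x k))
    (h1 : ∀ k, dist (x k) (x (k + 1)) ≤ C1 * √(θ (x k) - θ (x (k + 1))))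
    (h2 : ∀ k, k % N = 0 → ∀ y, θ (x k) - θ y ≤ C5 * (θ (x k) - θ (x (k + N)))) :
    ∃ xb, (∀ y, θ xb ≤ θ y) ∧ Tendsto x atTop (nhds xb) ∧
      ∃ C ρ : ℝ, 0 ≤ ρ ∧ ρ < 1 ∧ ∀ k, dist (x k) xb ≤ C * ρ ^ k := by
  have hanti : Antitone (fun k => θ (x k)) := antitone_nat_of_succ_le hmono
  -- infimum
  have hbdd : BddBelow (Set.range θ) := by
    refine ⟨θ (x 0) - C5 * (θ (x 0) - θ (x (0 + N))), ?_⟩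
    rintro _ ⟨y, rfl⟩
    have := h2 0 (by simp) y
    linarith
  set I := sInf (Set.range θ) with hI
  have hIle : ∀ y, I ≤ θ y := fun y => csInf_le hbdd ⟨y, rfl⟩
  have : Nonempty E := ⟨x 0⟩
  set D := max C5 2 with hD
  have hD2 : 2 ≤ D := le_max_right _ _
  have hV : ∀ k, k % N = 0 → θ (x k) - I ≤ D * (θ (x k) - θ (x (k + N))) := by
    intro k hk
    have hd : 0 ≤ θ (x k) - θ (x (k + N)) := sub_nonneg.2 (hanti (by omega))
    have : θ (x k) - D * (θ (x k) - θ (x (k + N))) ≤ I := by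
      apply le_csInf (Set.range_nonempty θ)
      rintro _ ⟨y, rfl⟩
      have := h2 k hk y
      have := mul_le_mul_of_nonneg_right (le_max_left C5 2) hd
      linarith
    linarith
  set r : ℝ := 1 - 1 / D with hr
  have hDi : 1 / D ≤ 1 / 2 := one_div_le_one_div_of_le (by norm_num) hD2
  have hDp : 0 < 1 / D := by positivity
  have hr0 : 0 < r := by rw [hr]; linarith
  have hr1 : r < 1 := by rw [hr]; linarith
  have hq : ∀ q, θ (x (q * N)) - I ≤ r ^ q * (θ (x 0) - I) := by
    intro q
    induction q with
    | zero => simp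
    | succ q ih =>
      have h := hV (q * N) (by simp)
      have e : (q + 1) * N = q * N + N := by ring
      rw [e]
      have h' : (1 / D) * (θ (x (q * N)) - I) ≤ θ (x (q * N)) - θ (x (q * N + N)) := by
        rw [one_div, inv_mul_le_iff₀ (by linarith)]; exact h
      calc θ (x (q * N + N)) - I ≤ r * (θ (x (q * N)) - I) := by rw [hr]; linarith
        _ ≤ r * (r ^ q * (θ (x 0) - I)) := by gcongr
        _ = _ := by ring
  set s : ℝ := r ^ (1 / (2 * N : ℝ)) with hs
  have hNr : (0 : ℝ) < N := by exact_mod_cast hN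
  have hs0 : 0 < s := Real.rpow_pos_of_pos hr0 _
  have hs1 : s < 1 := Real.rpow_lt_one hr0.le hr1 (by positivity)
  have hsr : s ^ (2 * N) = r := by
    rw [hs, ← Real.rpow_natCast, ← Real.rpow_mul hr0.le]
    push_cast
    rw [one_div, inv_mul_cancel₀ (by positivity), Real.rpow_one]
  have hV0 : 0 ≤ θ (x 0) - I := sub_nonneg.2 (hIle _)
  set B := (θ (x 0) - I) / r with hB
  have hB0 : 0 ≤ B := by positivity
  have hk : ∀ k, θ (x k) - I ≤ B * (s ^ k) ^ 2 := by
    intro k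
    have h3 : k / N * N ≤ k := Nat.div_mul_le_self k N
    have h4 : k < k / N * N + N := by
      have := Nat.div_add_mod k N
      have := Nat.mod_lt k hN
      have := mul_comm (k / N) N
      omega
    have h5 : r ^ (k / N) * r ≤ (s ^ k) ^ 2 := by
      rw [← hsr, ← pow_mul, ← pow_mul, ← pow_add]
      apply pow_le_pow_of_le_one hs0.le hs1.le
      nlinarith
    calc θ (x k) - I ≤ θ (x (k / N * N)) - I := by
          have := hanti h3
          simp only at this
          linarith
      _ ≤ r ^ (k / N) * (θ (x 0) - I) := hq _
      _ = B * (r ^ (k / N) * r) := by rw [hB]; field_simp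
      _ ≤ _ := by gcongr
  have hdist : ∀ k, dist (x k) (x (k + 1)) ≤ (C1 * √B) * s ^ k := by
    intro k
    refine (h1 k).trans ?_
    rw [mul_assoc]
    apply mul_le_mul_of_nonneg_left _ hC1
    have : √(B * (s ^ k) ^ 2) = √B * s ^ k := by
      rw [Real.sqrt_mul hB0, Real.sqrt_sq (by positivity)]
    rw [← this]
    apply Real.sqrt_le_sqrt
    have := hk k
    have := hIle (x (k + 1))
    linarith
  have hc := cauchySeq_of_le_geometric s (C1 * √B) hs1 hdist
  obtain ⟨xb, hxb⟩ := cauchySeq_tendsto_of_complete hc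
  refine ⟨xb, ?_, hxb, C1 * √B / (1 - s), s, hs0.le, hs1, ?_⟩
  · have t1 : Tendsto (fun k => θ (x k)) atTop (nhds (θ xb)) := (hθ.tendsto xb).comp hxb
    have t2 : Tendsto (fun k => B * (s ^ k) ^ 2 + I) atTop (nhds (B * 0 ^ 2 + I)) :=
      (((tendsto_pow_atTop_nhds_zero_of_lt_one hs0.le hs1).pow 2).const_mul B).add_const I
    have : θ xb ≤ B * 0 ^ 2 + I := le_of_tendsto_of_tendsto' t1 t2 (fun k => by
      have := hk k; linarith)
    intro y
    have := hIle y
    simp at *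
    linarith
  · intro k
    have := dist_le_of_le_geometric_of_tendsto s (C1 * √B) hs1 hdist hxb k
    refine this.trans (le_of_eq ?_)
    ring

/-- state space -/
abbrev HE (n : ℕ) := (Fin (n + 1) → ℝ) × (ℝ × ℝ × ℝ)

noncomputable def hTT {n : ℕ} (x : HE n) (i j : Fin (n + 1)) : ℝ :=
  x.1 i - x.1 j + x.2.1 + (if i = Fin.last n then x.2.2.1 else 0)
    - (if j = Fin.last n then x.2.2.2 else 0)

noncomputable def hFF {n : ℕ} (A : Matrix (Fin n) (Fin n) ℝ) (x : HE n) (i j : Fin (n + 1)) : ℝ :=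
  augMatrix A i j * Real.exp (hTT x i j)

noncomputable def hth {n : ℕ} (A : Matrix (Fin n) (Fin n) ℝ) (α : ℝ) (x : HE n) : ℝ :=
  effDual A α x.1 x.2.1 x.2.2.1 x.2.2.2

section aug
variable {n : ℕ} (A : Matrix (Fin n) (Fin n) ℝ)

theorem aug_cc (i j : Fin n) : augMatrix A i.castSucc j.castSucc = A i j := by
  simp [augMatrix]
theorem aug_cl (i : Fin n) : augMatrix A i.castSucc (Fin.last n) = 1 := by
  simp [augMatrix]
theorem aug_lc (i : Fin n) : augMatrix A (Fin.last n) i.castSucc = 1 := by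
  simp [augMatrix]
theorem aug_ll : augMatrix A (Fin.last n) (Fin.last n) = 0 := by
  simp [augMatrix]

theorem aug_nonneg (hA : ∀ i j, 0 ≤ A i j) (i j : Fin (n + 1)) : 0 ≤ augMatrix A i j := by
  unfold augMatrix
  split_ifs <;> first | apply hA | norm_num

theorem hTT_cc (x : HE n) (i j : Fin n) :
    hTT x i.castSucc j.castSucc = x.1 i.castSucc - x.1 j.castSucc + x.2.1 := by
  simp [hTT, (Fin.castSucc_lt_last _).ne]
theorem hTT_cl (x : HE n) (i : Fin n) :
    hTT x i.castSucc (Fin.last n) = x.1 i.castSucc - x.1 (Fin.last n) + x.2.1 - x.2.2.2 := by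
  simp [hTT, (Fin.castSucc_lt_last _).ne]
theorem hTT_lc (x : HE n) (i : Fin n) :
    hTT x (Fin.last n) i.castSucc = x.1 (Fin.last n) - x.1 i.castSucc + x.2.1 + x.2.2.1 := by
  simp [hTT, (Fin.castSucc_lt_last _).ne]

theorem hFF_ll (x : HE n) : hFF A x (Fin.last n) (Fin.last n) = 0 := by
  simp [hFF, aug_ll]

theorem hth_eq (α : ℝ) (x : HE n) : hth A α x = (∑ i, ∑ j, hFF A x i j)
    - (1 - α) * x.2.2.1 - x.2.1 + (1 - α) * x.2.2.2 := by
  simp only [hth, effDual, Fin.sum_univ_castSucc, hFF_ll]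
  simp only [hFF, aug_cc, aug_cl, aug_lc, hTT_cc, hTT_cl, hTT_lc, Finset.sum_add_distrib, one_mul,
    add_zero]
  have e1 : ∀ i : Fin n, -x.2.2.2 - x.1 (Fin.last n) + x.1 i.castSucc + x.2.1
    = x.1 i.castSucc - x.1 (Fin.last n) + x.2.1 - x.2.2.2 := fun i => by ring
  have e2 : ∀ i : Fin n, x.2.2.1 + x.1 (Fin.last n) - x.1 i.castSucc + x.2.1
    = x.1 (Fin.last n) - x.1 i.castSucc + x.2.1 + x.2.2.1 := fun i => by ring
  simp only [e1, e2]

theorem hTT_sum (x : HE n) (f : Fin (n + 1) → Fin (n + 1) → ℝ) :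
    ∑ i, ∑ j, f i j * hTT x i j =
      ∑ l, ((∑ j, f l j) - ∑ i, f i l) * x.1 l + (∑ j, f (Fin.last n) j) * x.2.2.1
        - (∑ i, f i (Fin.last n)) * x.2.2.2 + (∑ i, ∑ j, f i j) * x.2.1 := by
  have e : ∀ i j, f i j * hTT x i j = f i j * x.1 i - f i j * x.1 j + f i j * x.2.1
      + (if i = Fin.last n then f i j * x.2.2.1 else 0)
      - (if j = Fin.last n then f i j * x.2.2.2 else 0) := by
    intro i j
    unfold hTT
    split_ifs <;> ring
  simp only [e, Finset.sum_add_distrib, Finset.sum_sub_distrib, sub_mul, Finset.sum_mul]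
  rw [Finset.sum_comm (f := fun i j => f i j * x.1 j)]
  rw [Finset.sum_comm (f := fun i j => if i = Fin.last n then f i j * x.2.2.1 else 0)]
  simp
  ring

theorem hTT_sub (x y : HE n) (i j) : hTT (y - x) i j = hTT y i j - hTT x i j := by
  unfold hTT
  split_ifs <;> simp <;> ring

theorem hTT_abs_le (x : HE n) (i j) : |hTT x i j| ≤ 5 * ‖x‖ := by
  have h1 : ∀ i, |x.1 i| ≤ ‖x‖ := fun i => (norm_le_pi_norm x.1 i).trans (norm_fst_le x)
  have h2 : |x.2.1| ≤ ‖x‖ := (norm_fst_le x.2).trans (norm_snd_le x)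
  have h3 : |x.2.2.1| ≤ ‖x‖ := (norm_fst_le x.2.2).trans ((norm_snd_le x.2).trans (norm_snd_le x))
  have h4 : |x.2.2.2| ≤ ‖x‖ := (norm_snd_le x.2.2).trans ((norm_snd_le x.2).trans (norm_snd_le x))
  have a1 := abs_le.1 (h1 i)
  have a2 := abs_le.1 (h1 j)
  have a3 := abs_le.1 h2
  have a4 := abs_le.1 h3
  have a5 := abs_le.1 h4
  unfold hTT
  rw [abs_le]
  split_ifs <;> constructor <;> linarith

theorem hth_cont (α : ℝ) : Continuous (hth A α) := by
  unfold hth effDual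
  fun_prop

end aug

section bounds
variable {n : ℕ} (A : Matrix (Fin n) (Fin n) ℝ)

theorem hcoer (c ρ t : ℝ) (hc : 0 < c) (hρ : 0 < ρ) :
    ρ * |t| - 2 * ρ ^ 2 / c ≤ c * Real.exp t - ρ * t := by
  have hq : 0 ≤ 2 * ρ ^ 2 / c := by positivity
  rcases le_total t 0 with h | h
  · rw [abs_of_nonpos h]
    have := mul_pos hc (Real.exp_pos t)
    linarith
  · rw [abs_of_nonneg h]
    have h1 := Real.quadratic_le_exp_of_nonneg h
    have h2 : c * (1 + t + t ^ 2 / 2) ≤ c * Real.exp t := by gcongr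
    have h3 : 0 ≤ c / 2 * (t - 2 * ρ / c) ^ 2 := by positivity
    have h4 : c / 2 * (t - 2 * ρ / c) ^ 2 = c * t ^ 2 / 2 - 2 * ρ * t + 2 * ρ ^ 2 / c := by
      field_simp; ring
    have : 0 ≤ c * t := by positivity
    nlinarith

theorem hbound (hA : ∀ i j, 0 ≤ A i j) (α : ℝ) (ρ : Matrix (Fin (n + 1)) (Fin (n + 1)) ℝ)
    (hρ : FeasibleFlow A α ρ) (L : ℝ) : ∃ R, 0 ≤ R ∧ ∀ x, hth A α x ≤ L → ∀ i j,
      0 < augMatrix A i j → |hTT x i j| ≤ R := by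
  obtain ⟨h1, h2, h3, h4, h5, h6⟩ := hρ
  have hρ0 : ∀ i j, 0 ≤ ρ i j := by
    intro i j
    rcases (aug_nonneg A hA i j).lt_or_eq with h | h
    · exact (h1 i j h).le
    · rw [h2 i j h.symm]
  have hll : ρ (Fin.last n) (Fin.last n) = 0 := h2 _ _ (aug_ll A)
  set B := ∑ i, ∑ j, 2 * ρ i j ^ 2 / augMatrix A i j with hB
  refine ⟨∑ i, ∑ j, |L + B| / ρ i j, ?_, ?_⟩
  · exact Finset.sum_nonneg fun i _ => Finset.sum_nonneg fun j _ =>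
      div_nonneg (abs_nonneg _) (hρ0 i j)
  intro x hx i j hij
  have key : hth A α x = ∑ i, ∑ j, (hFF A x i j - ρ i j * hTT x i j) := by
    simp only [Finset.sum_sub_distrib]
    rw [hTT_sum x (fun i j => ρ i j), hth_eq]
    have e1 : ∑ j, ρ (Fin.last n) j = 1 - α := by rw [Fin.sum_univ_castSucc, hll, h5, add_zero]
    have e2 : ∑ i, ρ i (Fin.last n) = 1 - α := by rw [Fin.sum_univ_castSucc, hll, h6, add_zero]
    rw [e1, e2, h3]
    have : ∑ l, (∑ j, ρ l j - ∑ i, ρ i l) * x.1 l = 0 :=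
      Finset.sum_eq_zero fun l _ => by rw [h4 l]; ring
    rw [this]; ring
  have hge : ∑ i, ∑ j, ρ i j * |hTT x i j| ≤ L + B := by
    have : ∑ i, ∑ j, (ρ i j * |hTT x i j| - 2 * ρ i j ^ 2 / augMatrix A i j) ≤ hth A α x := by
      rw [key]
      refine Finset.sum_le_sum fun i _ => Finset.sum_le_sum fun j _ => ?_
      rcases (aug_nonneg A hA i j).lt_or_eq with h | h
      · exact hcoer _ _ _ h (h1 i j h)
      · rw [h2 i j h.symm, hFF, ← h]; simp
    simp only [Finset.sum_sub_distrib] at this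
    linarith
  have hs : ρ i j * |hTT x i j| ≤ ∑ i, ∑ j, ρ i j * |hTT x i j| := by
    have hn : ∀ i j, 0 ≤ ρ i j * |hTT x i j| := fun i j => mul_nonneg (hρ0 i j) (abs_nonneg _)
    refine (Finset.single_le_sum (f := fun j => ρ i j * |hTT x i j|) (fun j _ => hn i j)
      (Finset.mem_univ j)).trans ?_
    exact Finset.single_le_sum (f := fun i => ∑ j, ρ i j * |hTT x i j|)
      (fun i _ => Finset.sum_nonneg fun j _ => hn i j) (Finset.mem_univ i)
  have hs2 : |L + B| / ρ i j ≤ ∑ i, ∑ j, |L + B| / ρ i j := by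
    have hn : ∀ i j, 0 ≤ |L + B| / ρ i j := fun i j => div_nonneg (abs_nonneg _) (hρ0 i j)
    refine (Finset.single_le_sum (f := fun j => |L + B| / ρ i j) (fun j _ => hn i j)
      (Finset.mem_univ j)).trans ?_
    exact Finset.single_le_sum (f := fun i => ∑ j, |L + B| / ρ i j)
      (fun i _ => Finset.sum_nonneg fun j _ => hn i j) (Finset.mem_univ i)
  refine le_trans ?_ hs2
  rw [le_div_iff₀ (h1 i j hij), mul_comm]
  exact (hs.trans hge).trans (le_abs_self _)

theorem hFF_nonneg (hA : ∀ i j, 0 ≤ A i j) (x : HE n) (i j) : 0 ≤ hFF A x i j :=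
  mul_nonneg (aug_nonneg A hA i j) (Real.exp_pos _).le

theorem hbound2 (hA : ∀ i j, 0 ≤ A i j) (R : ℝ) :
    ∃ m M : ℝ, 0 < m ∧ 0 < M ∧ ∀ x : HE n,
      (∀ i j, 0 < augMatrix A i j → |hTT x i j| ≤ R) →
      (∀ i j, 0 < augMatrix A i j → m ≤ hFF A x i j) ∧ (∑ i, ∑ j, hFF A x i j) ≤ M := by
  have hn : ∀ i j, 0 ≤ (augMatrix A i j)⁻¹ := fun i j => inv_nonneg.2 (aug_nonneg A hA i j)
  set Q := ∑ i, ∑ j, (augMatrix A i j)⁻¹ with hQ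
  have hQ0 : 0 ≤ Q := Finset.sum_nonneg fun i _ => Finset.sum_nonneg fun j _ => hn i j
  have hP0 : 0 ≤ ∑ i, ∑ j, augMatrix A i j * Real.exp R :=
    Finset.sum_nonneg fun i _ => Finset.sum_nonneg fun j _ =>
      mul_nonneg (aug_nonneg A hA i j) (Real.exp_pos _).le
  refine ⟨(Q + 1)⁻¹ * Real.exp (-R), (∑ i, ∑ j, augMatrix A i j * Real.exp R) + 1,
    by positivity, by positivity, ?_⟩
  intro x hx
  constructor
  · intro i j hij
    have hs2 : (augMatrix A i j)⁻¹ ≤ Q := by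
      refine (Finset.single_le_sum (f := fun j => (augMatrix A i j)⁻¹) (fun j _ => hn i j)
        (Finset.mem_univ j)).trans ?_
      exact Finset.single_le_sum (f := fun i => ∑ j, (augMatrix A i j)⁻¹)
        (fun i _ => Finset.sum_nonneg fun j _ => hn i j) (Finset.mem_univ i)
    have : (Q + 1)⁻¹ ≤ augMatrix A i j := by
      rw [inv_le_comm₀ (by positivity) hij]; linarith
    unfold hFF
    have h := (abs_le.1 (hx i j hij)).1
    gcongr
  · have : (∑ i, ∑ j, hFF A x i j) ≤ ∑ i, ∑ j, augMatrix A i j * Real.exp R := by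
      refine Finset.sum_le_sum fun i _ => Finset.sum_le_sum fun j _ => ?_
      unfold hFF
      rcases (aug_nonneg A hA i j).lt_or_eq with h | h
      · have h := (abs_le.1 (hx i j h)).2
        gcongr
      · rw [← h]; simp
    linarith

theorem hexp_quad (R s : ℝ) (hs : |s| ≤ 2 * R) :
    s + Real.exp (-(2 * R)) / 4 * s ^ 2 ≤ Real.exp s - 1 := by
  set v := s / 2 with hv
  have hv2 : s = 2 * v := by rw [hv]; ring
  have hvR : |v| ≤ R := by rw [hv, abs_div, abs_two]; linarith
  have e1 : Real.exp s = Real.exp v ^ 2 := by rw [hv2, two_mul, Real.exp_add, sq]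
  have e2 : Real.exp (-(2 * R)) = Real.exp (-R) ^ 2 := by
    rw [sq, ← Real.exp_add]; congr 1; ring
  have h1 := Real.add_one_le_exp v
  have h2 : (Real.exp (-R) * |v|) ≤ |Real.exp v - 1| := by
    rcases le_total 0 v with h | h
    · rw [abs_of_nonneg h]
      have : Real.exp (-R) ≤ 1 := by
        rw [Real.exp_le_one_iff]; linarith [abs_nonneg v]
      have := mul_le_of_le_one_left h this
      exact le_trans (by linarith) (le_abs_self _)
    · rw [abs_of_nonpos h] at *
      have h3 := Real.add_one_le_exp (-v)
      have h4 : Real.exp (-R) ≤ Real.exp v := Real.exp_le_exp.2 (by linarith)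
      have h5 : Real.exp v * Real.exp (-v) = 1 := by rw [← Real.exp_add]; simp
      refine le_trans ?_ (neg_le_abs _)
      have : Real.exp (-R) * (-v) ≤ Real.exp v * (-v) := by
        apply mul_le_mul_of_nonneg_right h4; linarith
      nlinarith [Real.exp_pos v]
  have h3 : (Real.exp (-R) * |v|) ^ 2 ≤ (Real.exp v - 1) ^ 2 := by
    rw [← sq_abs (Real.exp v - 1)]
    gcongr
  rw [mul_pow, sq_abs] at h3
  rw [e1, e2, hv2]
  nlinarith

theorem hPL (hA : ∀ i j, 0 ≤ A i j) (hA0 : A ≠ 0) (α R m : ℝ) (hm : 0 < m) :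
    ∃ K : ℝ, 0 ≤ K ∧ ∀ x y : HE n,
      (∀ i j, 0 < augMatrix A i j → |hTT x i j| ≤ R) →
      (∀ i j, 0 < augMatrix A i j → |hTT y i j| ≤ R) →
      (∀ i j, 0 < augMatrix A i j → m ≤ hFF A x i j) → ∀ G : ℝ, 0 ≤ G →
      (∀ i : Fin n, |(∑ j, hFF A x i.castSucc j) - ∑ j, hFF A x j i.castSucc| ≤ G) →
      |(∑ j, hFF A x (Fin.last n) j) - (1 - α)| ≤ G →
      |(∑ i, ∑ j, hFF A x i j) - 1| ≤ G →
      hth A α x - hth A α y ≤ K * G ^ 2 := by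
  obtain ⟨i0, j0, hij⟩ : ∃ i j, A i j ≠ 0 := by
    by_contra! h
    exact hA0 (by ext i j; exact h i j)
  have hij : 0 < A i0 j0 := lt_of_le_of_ne (hA _ _) hij.symm
  set κ := m * (Real.exp (-(2 * R)) / 4) with hκ
  have hκ0 : 0 < κ := by positivity
  set W : ℝ := 4 * n + 11 with hW
  refine ⟨W ^ 2 / (4 * κ), by positivity, ?_⟩
  intro x y hx hy hmx G hG g1 g2 g3
  set z := y - x with hz
  set s := hTT z with hs
  have hsxy : ∀ i j, s i j = hTT y i j - hTT x i j := fun i j => hTT_sub x y i j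
  set Q := ∑ i, ∑ j, (if 0 < augMatrix A i j then s i j ^ 2 else 0) with hQ
  have hQn : ∀ i j, 0 ≤ (if 0 < augMatrix A i j then s i j ^ 2 else 0) := by
    intro i j; split_ifs <;> positivity
  have hQ0 : 0 ≤ Q := Finset.sum_nonneg fun i _ => Finset.sum_nonneg fun j _ => hQn i j
  set σ := √Q with hσ
  have hσ0 : 0 ≤ σ := Real.sqrt_nonneg _
  have hσ2 : σ ^ 2 = Q := Real.sq_sqrt hQ0
  have hsσ : ∀ i j, 0 < augMatrix A i j → |s i j| ≤ σ := by
    intro i j h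
    apply Real.abs_le_sqrt
    have : (if 0 < augMatrix A i j then s i j ^ 2 else 0) ≤ Q := by
      refine (Finset.single_le_sum (f := fun j => if 0 < augMatrix A i j then s i j ^ 2 else 0)
        (fun j _ => hQn i j) (Finset.mem_univ j)).trans ?_
      exact Finset.single_le_sum
        (f := fun i => ∑ j, if 0 < augMatrix A i j then s i j ^ 2 else 0)
        (fun i _ => Finset.sum_nonneg fun j _ => hQn i j) (Finset.mem_univ i)
    rwa [if_pos h] at this
  have hterm : ∀ i j, hFF A x i j * s i j + κ * (if 0 < augMatrix A i j then s i j ^ 2 else 0)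
      ≤ hFF A y i j - hFF A x i j := by
    intro i j
    by_cases h : 0 < augMatrix A i j
    · rw [if_pos h]
      have e : hFF A y i j = hFF A x i j * Real.exp (s i j) := by
        unfold hFF; rw [hsxy, mul_assoc, ← Real.exp_add]; congr 2; ring
      have hb : |s i j| ≤ 2 * R := by
        rw [hsxy]
        have := abs_le.1 (hx i j h)
        have := abs_le.1 (hy i j h)
        rw [abs_le]; constructor <;> linarith
      have h1 := hexp_quad R (s i j) hb
      have h2 := hmx i j h
      have h3 : 0 ≤ Real.exp (-(2 * R)) / 4 * s i j ^ 2 := by positivity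
      rw [e, hκ]
      nlinarith
    · have h0 : augMatrix A i j = 0 := le_antisymm (not_lt.1 h) (aug_nonneg A hA i j)
      simp [hFF, h0]
  have hsum : (∑ i, ∑ j, hFF A x i j * s i j) + κ * Q
      ≤ (∑ i, ∑ j, hFF A y i j) - ∑ i, ∑ j, hFF A x i j := by
    have := Finset.sum_le_sum fun i (_ : i ∈ Finset.univ) =>
      Finset.sum_le_sum fun j (_ : j ∈ Finset.univ) => hterm i j
    simpa only [Finset.sum_add_distrib, Finset.sum_sub_distrib, ← Finset.mul_sum] using this
  rw [hs, hTT_sum] at hsum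
  set f := hFF A x with hf
  set g : Fin (n + 1) → ℝ := fun l => (∑ j, f l j) - ∑ i, f i l with hg
  have hg0 : ∑ l, g l = 0 := by
    simp only [hg, Finset.sum_sub_distrib]
    rw [Finset.sum_comm]; ring
  set c := z.1 (Fin.last n) + z.2.2.2 with hc
  have hlin : ∑ l, g l * z.1 l = (∑ i : Fin n, g i.castSucc * (z.1 i.castSucc - c))
      - g (Fin.last n) * z.2.2.2 := by
    have : ∑ l, g l * z.1 l = ∑ l, g l * (z.1 l - c) := by
      simp only [mul_sub, Finset.sum_sub_distrib, ← Finset.sum_mul, hg0]; ring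
    rw [this, Fin.sum_univ_castSucc, hc]; ring
  have s1 : ∀ i : Fin n, |(z.1 i.castSucc - c) + z.2.1| ≤ σ := by
    intro i
    have := hsσ i.castSucc (Fin.last n) (by rw [aug_cl]; norm_num)
    rw [hs, hTT_cl] at this
    convert this using 2
    rw [hc]; ring
  have s2 : ∀ i : Fin n, |(z.2.2.1 - z.2.2.2) - (z.1 i.castSucc - c) + z.2.1| ≤ σ := by
    intro i
    have := hsσ (Fin.last n) i.castSucc (by rw [aug_lc]; norm_num)
    rw [hs, hTT_lc] at this
    convert this using 2
    rw [hc]; ring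
  have s3 : |(z.1 i0.castSucc - c) - (z.1 j0.castSucc - c) + z.2.1| ≤ σ := by
    have := hsσ i0.castSucc j0.castSucc (by rw [aug_cc]; exact hij)
    rw [hs, hTT_cc] at this
    convert this using 2
    ring
  have b1 := abs_le.1 (s1 i0)
  have b2 := abs_le.1 (s1 j0)
  have b3 := abs_le.1 (s2 j0)
  have b4 := abs_le.1 s3
  have c1 : |z.2.1| ≤ 3 * σ := by rw [abs_le]; constructor <;> linarith
  have c1' := abs_le.1 c1
  have c2 : ∀ i : Fin n, |z.1 i.castSucc - c| ≤ 4 * σ := by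
    intro i
    have := abs_le.1 (s1 i)
    rw [abs_le]; constructor <;> linarith
  have c3 : |z.2.2.1 - z.2.2.2| ≤ 8 * σ := by
    have := abs_le.1 (c2 j0)
    rw [abs_le]; constructor <;> linarith
  have d1 : |∑ i : Fin n, g i.castSucc * (z.1 i.castSucc - c)| ≤ n * (G * (4 * σ)) := by
    refine (Finset.abs_sum_le_sum_abs _ _).trans ?_
    have : ∀ i ∈ (Finset.univ : Finset (Fin n)), |g i.castSucc * (z.1 i.castSucc - c)|
        ≤ G * (4 * σ) := by
      intro i _
      rw [abs_mul]
      exact mul_le_mul (g1 i) (c2 i) (abs_nonneg _) hG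
    refine (Finset.sum_le_sum this).trans ?_
    simp
  have d2 : |(∑ j, f (Fin.last n) j - (1 - α)) * (z.2.2.1 - z.2.2.2)| ≤ G * (8 * σ) := by
    rw [abs_mul]; exact mul_le_mul g2 c3 (abs_nonneg _) hG
  have d3 : |(∑ i, ∑ j, f i j - 1) * z.2.1| ≤ G * (3 * σ) := by
    rw [abs_mul]; exact mul_le_mul g3 c1 (abs_nonneg _) hG
  have e1 := (abs_le.1 d1).1
  have e2 := (abs_le.1 d2).1
  have e3 := (abs_le.1 d3).1
  have hfin : -(W * G * σ) + κ * σ ^ 2 ≤ hth A α y - hth A α x := by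
    rw [hth_eq, hth_eq, hσ2]
    have hgl : g (Fin.last n) = (∑ j, f (Fin.last n) j) - ∑ i, f i (Fin.last n) := rfl
    change (∑ l, g l * z.1 l) + _ - _ + _ + _ ≤ _ at hsum
    rw [hlin, hgl] at hsum
    have za : y.2.2.1 = x.2.2.1 + z.2.2.1 := by rw [hz]; simp
    have zb : y.2.2.2 = x.2.2.2 + z.2.2.2 := by rw [hz]; simp
    have zm : y.2.1 = x.2.1 + z.2.1 := by rw [hz]; simp
    have hff : ∑ i, ∑ j, hFF A x i j = ∑ i, ∑ j, f i j := rfl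
    rw [hW]
    rw [za, zb, zm, hff]
    linarith
  have hsq : 0 ≤ κ * (σ - W * G / (2 * κ)) ^ 2 := by positivity
  have hsqe : κ * (σ - W * G / (2 * κ)) ^ 2
      = κ * σ ^ 2 - W * G * σ + W ^ 2 / (4 * κ) * G ^ 2 := by
    field_simp; ring
  linarith
end bounds

section steps
variable {n : ℕ} (A : Matrix (Fin n) (Fin n) ℝ)

theorem hscal1 (O I M D : ℝ) (hO : 0 ≤ O) (hI : 0 ≤ I) (hOM : O ≤ M) (hIM : I ≤ M)
    (hD : (√O - √I) ^ 2 ≤ D) : |O - I| ≤ 2 * √M * √D := by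
  have h1 : |√O - √I| ≤ √D := Real.abs_le_sqrt hD
  have h2 : O - I = (√O + √I) * (√O - √I) := by
    have := Real.mul_self_sqrt hO
    have := Real.mul_self_sqrt hI
    nlinarith
  have h3 := Real.sqrt_le_sqrt hOM
  have h4 := Real.sqrt_le_sqrt hIM
  rw [h2, abs_mul, abs_of_nonneg (by positivity)]
  gcongr
  linarith

theorem hscal2 (O I m : ℝ) (hm : 0 < m) (hO : m ≤ O) (hI : m ≤ I) :
    |Real.log I - Real.log O| ≤ |O - I| / m := by
  have hO0 : 0 < O := by linarith
  have hI0 : 0 < I := by linarith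
  have key : ∀ u v : ℝ, m ≤ u → m ≤ v → Real.log u - Real.log v ≤ |u - v| / m := by
    intro u v hu hv
    have hu0 : 0 < u := by linarith
    have hv0 : 0 < v := by linarith
    rw [← Real.log_div hu0.ne' hv0.ne']
    refine (Real.log_le_sub_one_of_pos (by positivity)).trans ?_
    have : u / v - 1 = (u - v) / v := by field_simp
    rw [this]
    calc (u - v) / v ≤ |u - v| / v := by gcongr; exact le_abs_self _
      _ ≤ |u - v| / m := by gcongr
  rw [abs_le]
  have h1 := key I O hI hO
  have h2 := key O I hO hI
  rw [abs_sub_comm] at h1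
  constructor <;> linarith

theorem hscal3 (F f : ℝ) (hF : 0 < F) (hf : 0 < f) :
    (√F - √f) ^ 2 ≤ F - f + f * (Real.log f - Real.log F) := by
  have h1 : Real.log (√F / √f) ≤ √F / √f - 1 := Real.log_le_sub_one_of_pos (by positivity)
  rw [Real.log_div (by positivity) (by positivity), Real.log_sqrt hF.le, Real.log_sqrt hf.le] at h1
  have h2 : f * (√F / √f) = √f * √F := by
    have : 0 < √f := by positivity
    field_simp
    rw [Real.sq_sqrt hf.le]
  have h3 := mul_le_mul_of_nonneg_left h1 hf.le
  have := Real.sq_sqrt hf.le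
  have := Real.sq_sqrt hF.le
  nlinarith

theorem hcoord_eq (hA : ∀ i j, 0 ≤ A i j) (hn : 0 < n) (x : HE n) (l : Fin (n + 1)) :
    coordUpdate A x.2.2.1 x.2.2.2 x.1 l = x.1 l +
      (1 / 2) * (Real.log (∑ i, hFF A x i l) - Real.log (∑ j, hFF A x l j)) := by
  have hne : (Finset.univ : Finset (Fin n)).Nonempty := ⟨⟨0, hn⟩, Finset.mem_univ _⟩
  induction l using Fin.lastCases with
  | last =>
    have e1 : ∑ i, hFF A x i (Fin.last n) = Real.exp (x.2.1 - x.1 (Fin.last n)) *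
        ∑ i : Fin n, Real.exp (-x.2.2.2 + x.1 i.castSucc) := by
      rw [Fin.sum_univ_castSucc, hFF_ll, add_zero, Finset.mul_sum]
      refine Finset.sum_congr rfl fun i _ => ?_
      rw [hFF, aug_cl, hTT_cl, one_mul, ← Real.exp_add]; congr 1; ring
    have e2 : ∑ j, hFF A x (Fin.last n) j = Real.exp (x.2.1 + x.1 (Fin.last n)) *
        ∑ j : Fin n, Real.exp (x.2.2.1 - x.1 j.castSucc) := by
      rw [Fin.sum_univ_castSucc, hFF_ll, add_zero, Finset.mul_sum]
      refine Finset.sum_congr rfl fun i _ => ?_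
      rw [hFF, aug_lc, hTT_lc, one_mul, ← Real.exp_add]; congr 1; ring
    have p1 : 0 < ∑ i : Fin n, Real.exp (-x.2.2.2 + x.1 i.castSucc) :=
      Finset.sum_pos (fun i _ => Real.exp_pos _) hne
    have p2 : 0 < ∑ j : Fin n, Real.exp (x.2.2.1 - x.1 j.castSucc) :=
      Finset.sum_pos (fun i _ => Real.exp_pos _) hne
    rw [e1, e2, Real.log_mul (Real.exp_pos _).ne' p1.ne', Real.log_mul (Real.exp_pos _).ne' p2.ne',
      Real.log_exp, Real.log_exp]
    simp only [coordUpdate, Fin.lastCases_last]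
    ring
  | cast l =>
    have e1 : ∑ i, hFF A x i l.castSucc = Real.exp (x.2.1 - x.1 l.castSucc) *
        ((∑ i : Fin n, A i l * Real.exp (x.1 i.castSucc))
          + Real.exp (x.2.2.1 + x.1 (Fin.last n))) := by
      rw [Fin.sum_univ_castSucc, mul_add, Finset.mul_sum]
      congr 1
      · refine Finset.sum_congr rfl fun i _ => ?_
        rw [hFF, aug_cc, hTT_cc, mul_left_comm, ← Real.exp_add]; congr 2; ring
      · rw [hFF, aug_lc, hTT_lc, one_mul, ← Real.exp_add]; congr 1; ring
    have e2 : ∑ j, hFF A x l.castSucc j = Real.exp (x.2.1 + x.1 l.castSucc) *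
        ((∑ j : Fin n, A l j * Real.exp (-(x.1 j.castSucc)))
          + Real.exp (-x.2.2.2 - x.1 (Fin.last n))) := by
      rw [Fin.sum_univ_castSucc, mul_add, Finset.mul_sum]
      congr 1
      · refine Finset.sum_congr rfl fun i _ => ?_
        rw [hFF, aug_cc, hTT_cc, mul_left_comm, ← Real.exp_add]; congr 2; ring
      · rw [hFF, aug_cl, hTT_cl, one_mul, ← Real.exp_add]; congr 1; ring
    have p1 : 0 < (∑ i : Fin n, A i l * Real.exp (x.1 i.castSucc))
          + Real.exp (x.2.2.1 + x.1 (Fin.last n)) :=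
      add_pos_of_nonneg_of_pos (Finset.sum_nonneg fun i _ => mul_nonneg (hA _ _) (Real.exp_pos _).le)
        (Real.exp_pos _)
    have p2 : 0 < (∑ j : Fin n, A l j * Real.exp (-(x.1 j.castSucc)))
          + Real.exp (-x.2.2.2 - x.1 (Fin.last n)) :=
      add_pos_of_nonneg_of_pos (Finset.sum_nonneg fun i _ => mul_nonneg (hA _ _) (Real.exp_pos _).le)
        (Real.exp_pos _)
    rw [e1, e2, Real.log_mul (Real.exp_pos _).ne' p1.ne', Real.log_mul (Real.exp_pos _).ne' p2.ne',
      Real.log_exp, Real.log_exp]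
    simp only [coordUpdate, Fin.lastCases_castSucc]
    ring

theorem hstep_p (hA : ∀ i j, 0 ≤ A i j) (hn : 0 < n) (α : ℝ) (x x' : HE n) (l : Fin (n + 1))
    (hI : 0 < ∑ i, hFF A x i l) (hO : 0 < ∑ j, hFF A x l j)
    (hx' : x' = (Function.update x.1 l (coordUpdate A x.2.2.1 x.2.2.2 x.1 l), x.2)) :
    (√(∑ j, hFF A x l j) - √(∑ i, hFF A x i l)) ^ 2 ≤ hth A α x - hth A α x' ∧
    dist x x' ≤ (1 / 2) * |Real.log (∑ i, hFF A x i l) - Real.log (∑ j, hFF A x l j)| := by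
  rw [hcoord_eq A hA hn] at hx'
  set I := ∑ i, hFF A x i l with hIdef
  set O := ∑ j, hFF A x l j with hOdef
  set δ := (1 / 2) * (Real.log I - Real.log O) with hδ
  constructor
  · have hF : ∀ i j, hFF A x' i j ≤ hFF A x i j + (if i = l then hFF A x i j * (Real.exp δ - 1) else 0)
        + (if j = l then hFF A x i j * (Real.exp (-δ) - 1) else 0) := by
      intro i j
      have hT : hTT x' i j = hTT x i j + (if i = l then δ else 0) - (if j = l then δ else 0) := by
        simp only [hx', hTT, Function.update_apply]
        by_cases h1 : i = l <;> by_cases h2 : j = l <;> simp [h1, h2] <;> ring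
      have hFx := hFF_nonneg A hA x i j
      have hFe : hFF A x' i j = hFF A x i j * Real.exp ((if i = l then δ else 0) - (if j = l then δ else 0)) := by
        unfold hFF; rw [hT, mul_assoc, ← Real.exp_add]; congr 2; ring
      rw [hFe]
      have hh : 1 ≤ 1 + (Real.exp δ - 1) + (Real.exp (-δ) - 1) := by
        have := Real.add_one_le_exp δ
        have := Real.add_one_le_exp (-δ)
        linarith
      have hm := mul_le_mul_of_nonneg_left hh hFx
      split_ifs <;> simp <;> linarith
    have hS : ∑ i, ∑ j, hFF A x' i j ≤ (∑ i, ∑ j, hFF A x i j) + O * (Real.exp δ - 1)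
        + I * (Real.exp (-δ) - 1) := by
      refine (Finset.sum_le_sum fun i _ => Finset.sum_le_sum fun j _ => hF i j).trans ?_
      simp only [Finset.sum_add_distrib]
      rw [Finset.sum_comm (f := fun i j => if i = l then hFF A x i j * (Real.exp δ - 1) else 0)]
      simp [hIdef, hOdef, Finset.sum_mul]
    have hm : x'.2 = x.2 := by rw [hx']
    rw [hth_eq, hth_eq, hm]
    have hexp : Real.exp δ = √I / √O := by
      have : δ = Real.log (√I / √O) := by
        rw [Real.log_div (by positivity) (by positivity), Real.log_sqrt hI.le, Real.log_sqrt hO.le,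
          hδ]; ring
      rw [this, Real.exp_log (by positivity)]
    have h1 : O * Real.exp δ = √O * √I := by
      rw [hexp]
      have : 0 < √O := by positivity
      field_simp
      rw [Real.sq_sqrt hO.le]
    have h2 : I * Real.exp (-δ) = √O * √I := by
      rw [Real.exp_neg, hexp]
      have : 0 < √I := by positivity
      have : 0 < √O := by positivity
      field_simp
      rw [Real.sq_sqrt hI.le]
    have h3 := Real.sq_sqrt hO.le
    have h4 := Real.sq_sqrt hI.le
    nlinarith
  · rw [hx', Prod.dist_eq]
    simp only [dist_self]
    have : |δ| = 1 / 2 * |Real.log I - Real.log O| := by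
      rw [hδ, abs_mul]; norm_num
    rw [← this]
    refine max_le ((dist_pi_le_iff (abs_nonneg _)).2 fun i => ?_) (abs_nonneg _)
    by_cases h : i = l
    · subst h; simp
    · simp [h]

theorem hF0 (x : HE n) : ∑ i : Fin n, ∑ j : Fin n, hFF A x i.castSucc j.castSucc
    = Real.exp x.2.1 * sigmaP A x.1 := by
  rw [sigmaP, Finset.mul_sum]
  refine Finset.sum_congr rfl fun i _ => ?_
  rw [Finset.mul_sum]
  refine Finset.sum_congr rfl fun j _ => ?_
  rw [hFF, aug_cc, hTT_cc, Real.exp_add]; ring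

theorem hF1 (x : HE n) : ∑ i, hFF A x i (Fin.last n)
    = Real.exp (x.2.1 - x.2.2.2) * ∑ i : Fin n, Real.exp (x.1 i.castSucc - x.1 (Fin.last n)) := by
  rw [Fin.sum_univ_castSucc, hFF_ll, add_zero, Finset.mul_sum]
  refine Finset.sum_congr rfl fun i _ => ?_
  rw [hFF, aug_cl, hTT_cl, one_mul, ← Real.exp_add]; congr 1; ring

theorem hF2 (x : HE n) : ∑ i, hFF A x (Fin.last n) i
    = Real.exp (x.2.1 + x.2.2.1) * ∑ i : Fin n, Real.exp (x.1 (Fin.last n) - x.1 i.castSucc) := by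
  rw [Fin.sum_univ_castSucc, hFF_ll, add_zero, Finset.mul_sum]
  refine Finset.sum_congr rfl fun i _ => ?_
  rw [hFF, aug_lc, hTT_lc, one_mul, ← Real.exp_add]; congr 1; ring

theorem hFsum (x : HE n) : ∑ i, ∑ j, hFF A x i j =
    (∑ i : Fin n, ∑ j : Fin n, hFF A x i.castSucc j.castSucc)
     + (∑ i, hFF A x i (Fin.last n)) + ∑ j, hFF A x (Fin.last n) j := by
  simp only [Fin.sum_univ_castSucc, hFF_ll, Finset.sum_add_distrib]
  ring

theorem hstep_m (hn : 0 < n) (α : ℝ) (hα₁ : 1 / 2 < α) (hα₂ : α < 1)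
    (x x' : HE n) (hx' : x' = (x.1, lamOpt A α x.1)) (hσ : 0 < sigmaP A x.1) (F0 F1 F2 : ℝ)
    (e0 : F0 = ∑ i : Fin n, ∑ j : Fin n, hFF A x i.castSucc j.castSucc)
    (e1 : F1 = ∑ i, hFF A x i (Fin.last n)) (e2 : F2 = ∑ j, hFF A x (Fin.last n) j) :
    (√F0 - √(2 * α - 1)) ^ 2 + (√F1 - √(1 - α)) ^ 2 + (√F2 - √(1 - α)) ^ 2
      ≤ hth A α x - hth A α x' ∧
    dist x x' ≤ |Real.log (2 * α - 1) - Real.log F0| + |Real.log (1 - α) - Real.log F1|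
      + |Real.log (1 - α) - Real.log F2| := by
  have hne : (Finset.univ : Finset (Fin n)).Nonempty := ⟨⟨0, hn⟩, Finset.mem_univ _⟩
  have hf0 : 0 < 2 * α - 1 := by linarith
  have hf : 0 < 1 - α := by linarith
  have a0 := hF0 A x
  have a1 := hF1 A x
  have a2 := hF2 A x
  have b0 := hF0 A x'
  have b1 := hF1 A x'
  have b2 := hF2 A x'
  have hp : x'.1 = x.1 := by rw [hx']
  rw [hp] at b0 b1 b2
  rw [← e0] at a0
  rw [← e1] at a1
  rw [← e2] at a2
  set σ := sigmaP A x.1 with hσd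
  set S1 := ∑ i : Fin n, Real.exp (x.1 i.castSucc - x.1 (Fin.last n)) with hS1
  set S2 := ∑ i : Fin n, Real.exp (x.1 (Fin.last n) - x.1 i.castSucc) with hS2
  have p1 : 0 < S1 := Finset.sum_pos (fun i _ => Real.exp_pos _) hne
  have p2 : 0 < S2 := Finset.sum_pos (fun i _ => Real.exp_pos _) hne
  have l0 : Real.log F0 = x.2.1 + Real.log σ := by
    rw [a0, Real.log_mul (Real.exp_pos _).ne' hσ.ne', Real.log_exp]
  have l1 : Real.log F1 = x.2.1 - x.2.2.2 + Real.log S1 := by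
    rw [a1, Real.log_mul (Real.exp_pos _).ne' p1.ne', Real.log_exp]
  have l2 : Real.log F2 = x.2.1 + x.2.2.1 + Real.log S2 := by
    rw [a2, Real.log_mul (Real.exp_pos _).ne' p2.ne', Real.log_exp]
  have m0 : x'.2.1 = Real.log (2 * α - 1) - Real.log σ := by
    rw [hx', ← Real.log_div hf0.ne' hσ.ne']; rfl
  have m2 : x'.2.2.1 = Real.log (1 - α) - Real.log (2 * α - 1) + Real.log σ - Real.log S2 := by
    rw [← Real.log_div hf.ne' hf0.ne', ← Real.log_mul (by positivity) hσ.ne',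
      ← Real.log_div (by positivity) p2.ne', hx']; rfl
  have m1 : x'.2.2.2 = -(Real.log (1 - α) - Real.log (2 * α - 1) + Real.log σ - Real.log S1) := by
    rw [← Real.log_div hf.ne' hf0.ne', ← Real.log_mul (by positivity) hσ.ne',
      ← Real.log_div (by positivity) p1.ne', hx']; rfl
  have c0 : Real.exp x'.2.1 * σ = 2 * α - 1 := by
    conv_lhs => rw [← Real.exp_log hσ]
    rw [← Real.exp_add, m0, sub_add_cancel, Real.exp_log hf0]
  have c1 : Real.exp (x'.2.1 - x'.2.2.2) * S1 = 1 - α := by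
    conv_lhs => rw [← Real.exp_log p1]
    rw [← Real.exp_add, m0, m1]
    conv_rhs => rw [← Real.exp_log hf]
    congr 1; ring
  have c2 : Real.exp (x'.2.1 + x'.2.2.1) * S2 = 1 - α := by
    conv_lhs => rw [← Real.exp_log p2]
    rw [← Real.exp_add, m0, m2]
    conv_rhs => rw [← Real.exp_log hf]
    congr 1; ring
  have q0 : 0 < F0 := by rw [a0]; positivity
  have q1 : 0 < F1 := by rw [a1]; positivity
  have q2 : 0 < F2 := by rw [a2]; positivity
  constructor
  · have h0 := hscal3 F0 _ q0 hf0
    have h1 := hscal3 F1 _ q1 hf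
    have h2 := hscal3 F2 _ q2 hf
    rw [hth_eq, hth_eq, hFsum, hFsum, b0, b1, b2, ← e0, ← e1, ← e2, c0, c1, c2, m0, m1, m2]
    rw [l0] at h0
    rw [l1] at h1
    rw [l2] at h2
    linarith
  · have g0 := abs_nonneg (Real.log (2 * α - 1) - Real.log F0)
    have g1 := abs_nonneg (Real.log (1 - α) - Real.log F1)
    have g2 := abs_nonneg (Real.log (1 - α) - Real.log F2)
    have n0 := abs_le.1 (le_refl |Real.log (2 * α - 1) - Real.log F0|)
    have n1 := abs_le.1 (le_refl |Real.log (1 - α) - Real.log F1|)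
    have n2 := abs_le.1 (le_refl |Real.log (1 - α) - Real.log F2|)
    rw [Prod.dist_eq, hp, dist_self, Prod.dist_eq, Prod.dist_eq]
    refine max_le (by positivity) (max_le ?_ (max_le ?_ ?_)) <;>
    · rw [Real.dist_eq, abs_le]
      constructor <;> linarith

theorem hLip (hA : ∀ i j, 0 ≤ A i j) (R : ℝ) : ∃ Λ : ℝ, 0 ≤ Λ ∧ ∀ x y : HE n,
      (∀ i j, 0 < augMatrix A i j → |hTT x i j| ≤ R) →
      (∀ i j, 0 < augMatrix A i j → |hTT y i j| ≤ R) →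
      ∀ i j, |hFF A x i j - hFF A y i j| ≤ Λ * dist x y := by
  set P := ∑ i, ∑ j, augMatrix A i j with hP
  have hn := aug_nonneg A hA
  have hP0 : 0 ≤ P := Finset.sum_nonneg fun i _ => Finset.sum_nonneg fun j _ => hn i j
  refine ⟨P * (Real.exp R * 5), by positivity, ?_⟩
  intro x y hx hy i j
  have hs2 : augMatrix A i j ≤ P := by
    refine (Finset.single_le_sum (f := fun j => augMatrix A i j) (fun j _ => hn i j)
      (Finset.mem_univ j)).trans ?_
    exact Finset.single_le_sum (f := fun i => ∑ j, augMatrix A i j)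
      (fun i _ => Finset.sum_nonneg fun j _ => hn i j) (Finset.mem_univ i)
  have key : ∀ t s : ℝ, t ≤ R → Real.exp t - Real.exp s ≤ Real.exp R * |t - s| := by
    intro t s ht
    have h1 := Real.add_one_le_exp (s - t)
    have h2 : Real.exp s = Real.exp t * Real.exp (s - t) := by rw [← Real.exp_add]; congr 1; ring
    have h3 : Real.exp t - Real.exp s ≤ Real.exp t * (t - s) := by
      rw [h2]; nlinarith [Real.exp_pos t]
    refine h3.trans ?_
    calc Real.exp t * (t - s) ≤ Real.exp t * |t - s| := by gcongr; exact le_abs_self _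
      _ ≤ _ := by gcongr
  rcases (hn i j).lt_or_eq with h | h
  · have k1 := key (hTT x i j) (hTT y i j) (abs_le.1 (hx i j h)).2
    have k2 := key (hTT y i j) (hTT x i j) (abs_le.1 (hy i j h)).2
    rw [abs_sub_comm] at k2
    have k3 : |Real.exp (hTT x i j) - Real.exp (hTT y i j)|
        ≤ Real.exp R * |hTT x i j - hTT y i j| := by
      rw [abs_le]; constructor <;> linarith
    have k4 : |hTT x i j - hTT y i j| ≤ 5 * dist x y := by
      rw [← hTT_sub, dist_eq_norm]; exact hTT_abs_le _ i j
    unfold hFF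
    rw [← mul_sub, abs_mul, abs_of_pos h, mul_assoc]
    calc _ ≤ P * (Real.exp R * |hTT x i j - hTT y i j|) := by gcongr
      _ ≤ P * (Real.exp R * (5 * dist x y)) := by gcongr
      _ = _ := by ring
  · unfold hFF
    rw [← h]; simp; positivity

end steps

set_option maxHeartbeats 1000000 in
/-- Exact cyclic coordinate descent for the effective HOTS dual: the `n+1` coordinates of `p`
and then the block of multipliers `(μ, a, b)` are updated cyclically, each update being the
exact minimization of `θ` over the corresponding coordinate(s). If a feasible flow with the
pattern of `A'` exists, the iterates converge at least linearly to a global minimizer of `θ`. -/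
theorem effHots_coordinate_descent_converges {n : ℕ} (A : Matrix (Fin n) (Fin n) ℝ)
    (hA : ∀ i j, 0 ≤ A i j) (hA0 : A ≠ 0) (α : ℝ) (hα₁ : 1 / 2 < α) (hα₂ : α < 1)
    (hfeas : ∃ ρ : Matrix (Fin (n + 1)) (Fin (n + 1)) ℝ, FeasibleFlow A α ρ)
    (p : ℕ → Fin (n + 1) → ℝ) (m : ℕ → ℝ × ℝ × ℝ)
    (hstep : ∀ k : ℕ,
      (∀ h : k % (n + 2) < n + 1,
        p (k + 1) = Function.update (p k) ⟨k % (n + 2), h⟩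
          (coordUpdate A (m k).2.1 (m k).2.2 (p k) ⟨k % (n + 2), h⟩) ∧
        m (k + 1) = m k) ∧
      (k % (n + 2) = n + 1 →
        p (k + 1) = p k ∧ m (k + 1) = lamOpt A α (p k))) :
    ∃ (pbar : Fin (n + 1) → ℝ) (mbar : ℝ × ℝ × ℝ),
      (∀ (q : Fin (n + 1) → ℝ) (μ a b : ℝ),
        effDual A α pbar mbar.1 mbar.2.1 mbar.2.2 ≤ effDual A α q μ a b) ∧
      Tendsto (fun k => (p k, m k)) atTop (nhds (pbar, mbar)) ∧
      ∃ C ρ : ℝ, 0 ≤ ρ ∧ ρ < 1 ∧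
        ∀ k, dist (p k, m k) (pbar, mbar) ≤ C * ρ ^ k := by
  obtain ⟨ρ, hρ⟩ := hfeas
  obtain ⟨i0, j0, hij⟩ : ∃ i j, A i j ≠ 0 := by
    by_contra! h
    exact hA0 (by ext i j; exact h i j)
  have hij : 0 < A i0 j0 := lt_of_le_of_ne (hA _ _) hij.symm
  have hn : 0 < n := i0.pos
  have hσ : ∀ q, 0 < sigmaP A q := by
    intro q
    have hnn : ∀ i j : Fin n, 0 ≤ A i j * Real.exp (q i.castSucc - q j.castSucc) :=
      fun i j => mul_nonneg (hA i j) (Real.exp_pos _).le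
    refine Finset.sum_pos' (fun i _ => Finset.sum_nonneg fun j _ => hnn i j)
      ⟨i0, Finset.mem_univ _, ?_⟩
    exact Finset.sum_pos' (fun j _ => hnn i0 j) ⟨j0, Finset.mem_univ _, by positivity⟩
  set x : ℕ → HE n := fun k => (p k, m k) with hx
  set L := hth A α (x 0) with hL
  obtain ⟨R, hR0, hR⟩ := hbound A hA α ρ hρ L
  obtain ⟨m1, M1, hm1, hM1, hmM⟩ := hbound2 A hA R
  set mm := min m1 (min (2 * α - 1) (1 - α)) with hmm
  set M := max M1 1 with hM
  have hmm0 : 0 < mm := lt_min hm1 (lt_min (by linarith) (by linarith))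
  have hmm1 : mm ≤ m1 := min_le_left _ _
  have hmm2 : mm ≤ 2 * α - 1 := (min_le_right _ _).trans (min_le_left _ _)
  have hmm3 : mm ≤ 1 - α := (min_le_right _ _).trans (min_le_right _ _)
  have hMM1 : M1 ≤ M := le_max_left _ _
  have hMM2 : 1 ≤ M := le_max_right _ _
  -- bounds for row and column sums
  have hFn := hFF_nonneg A hA
  have hrow : ∀ y, hth A α y ≤ L → ∀ l, mm ≤ ∑ j, hFF A y l j ∧ ∑ j, hFF A y l j ≤ M := by
    intro y hy l
    obtain ⟨b1, b2⟩ := hmM y (hR y hy)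
    constructor
    · obtain ⟨j, hj⟩ : ∃ j, 0 < augMatrix A l j := by
        induction l using Fin.lastCases with
        | last => exact ⟨i0.castSucc, by rw [aug_lc]; norm_num⟩
        | cast l => exact ⟨Fin.last n, by rw [aug_cl]; norm_num⟩
      exact (hmm1.trans (b1 l j hj)).trans (Finset.single_le_sum (f := fun j => hFF A y l j)
        (fun j _ => hFn y l j) (Finset.mem_univ j))
    · refine le_trans ?_ (b2.trans hMM1)
      exact Finset.single_le_sum (f := fun l => ∑ j, hFF A y l j)
        (fun l _ => Finset.sum_nonneg fun j _ => hFn y l j) (Finset.mem_univ l)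
  have hcol : ∀ y, hth A α y ≤ L → ∀ l, mm ≤ ∑ i, hFF A y i l ∧ ∑ i, hFF A y i l ≤ M := by
    intro y hy l
    obtain ⟨b1, b2⟩ := hmM y (hR y hy)
    constructor
    · obtain ⟨j, hj⟩ : ∃ j, 0 < augMatrix A j l := by
        induction l using Fin.lastCases with
        | last => exact ⟨i0.castSucc, by rw [aug_cl]; norm_num⟩
        | cast l => exact ⟨Fin.last n, by rw [aug_lc]; norm_num⟩
      exact (hmm1.trans (b1 j l hj)).trans (Finset.single_le_sum (f := fun j => hFF A y j l)
        (fun j _ => hFn y j l) (Finset.mem_univ j))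
    · refine le_trans ?_ (b2.trans hMM1)
      rw [Finset.sum_comm]
      exact Finset.single_le_sum (f := fun l => ∑ i, hFF A y i l)
        (fun l _ => Finset.sum_nonneg fun j _ => hFn y j l) (Finset.mem_univ l)
  have hcen : ∀ y, hth A α y ≤ L →
      mm ≤ ∑ i : Fin n, ∑ j : Fin n, hFF A y i.castSucc j.castSucc ∧
      ∑ i : Fin n, ∑ j : Fin n, hFF A y i.castSucc j.castSucc ≤ M := by
    intro y hy
    obtain ⟨b1, b2⟩ := hmM y (hR y hy)
    constructor
    · have h1 := b1 i0.castSucc j0.castSucc (by rw [aug_cc]; exact hij)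
      refine (hmm1.trans h1).trans ?_
      refine (Finset.single_le_sum (f := fun j : Fin n => hFF A y i0.castSucc j.castSucc)
        (fun j _ => hFn y _ _) (Finset.mem_univ j0)).trans ?_
      exact Finset.single_le_sum
        (f := fun i : Fin n => ∑ j : Fin n, hFF A y i.castSucc j.castSucc)
        (fun i _ => Finset.sum_nonneg fun j _ => hFn y _ _) (Finset.mem_univ i0)
    · have h1 := (hcol y hy (Fin.last n)).1
      have h2 := (hrow y hy (Fin.last n)).1
      rw [hFsum] at b2
      linarith
  set U := 6 * √M with hU
  have hU0 : 0 ≤ U := by positivity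
  -- single steps
  have stepP : ∀ k, hth A α (x k) ≤ L → ∀ h : k % (n + 2) < n + 1,
      hth A α (x (k + 1)) ≤ hth A α (x k) ∧
      dist (x k) (x (k + 1)) ≤ U / mm * √(hth A α (x k) - hth A α (x (k + 1))) ∧
      |(∑ j, hFF A (x k) ⟨k % (n + 2), h⟩ j) - ∑ i, hFF A (x k) i ⟨k % (n + 2), h⟩|
        ≤ U * √(hth A α (x k) - hth A α (x (k + 1))) := by
    intro k hk h
    obtain ⟨e1, e2⟩ := (hstep k).1 h
    set l : Fin (n + 1) := ⟨k % (n + 2), h⟩ with hl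
    have hx' : x (k + 1) = (Function.update (x k).1 l
        (coordUpdate A (x k).2.2.1 (x k).2.2.2 (x k).1 l), (x k).2) := Prod.ext e1 e2
    obtain ⟨r1, r2⟩ := hrow _ hk l
    obtain ⟨r3, r4⟩ := hcol _ hk l
    obtain ⟨s1, s2⟩ := hstep_p A hA hn α (x k) (x (k + 1)) l (by linarith) (by linarith) hx'
    set D := hth A α (x k) - hth A α (x (k + 1)) with hD
    have hD0 : 0 ≤ D := (sq_nonneg _).trans s1
    have t1 := hscal1 _ _ M D (by linarith) (by linarith) r2 r4 s1
    have t2 := hscal2 _ _ mm hmm0 r1 r3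
    have hsD : 0 ≤ √M * √D := by positivity
    refine ⟨by linarith, ?_, ?_⟩
    · refine s2.trans ?_
      have t3 : U / mm * √D = 6 * (√M * √D) / mm := by rw [hU]; ring
      rw [t3]
      have : |(∑ j, hFF A (x k) l j) - ∑ i, hFF A (x k) i l| / mm ≤ 6 * (√M * √D) / mm := by
        gcongr; linarith
      have := abs_nonneg (Real.log (∑ i, hFF A (x k) i l) - Real.log (∑ j, hFF A (x k) l j))
      linarith
    · rw [hU]; linarith
  have stepM : ∀ k, hth A α (x k) ≤ L → k % (n + 2) = n + 1 →
      hth A α (x (k + 1)) ≤ hth A α (x k) ∧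
      dist (x k) (x (k + 1)) ≤ U / mm * √(hth A α (x k) - hth A α (x (k + 1))) ∧
      |(∑ j, hFF A (x k) (Fin.last n) j) - (1 - α)|
        ≤ U * √(hth A α (x k) - hth A α (x (k + 1))) ∧
      |(∑ i, ∑ j, hFF A (x k) i j) - 1|
        ≤ U * √(hth A α (x k) - hth A α (x (k + 1))) := by
    intro k hk h
    obtain ⟨e1, e2⟩ := (hstep k).2 h
    have hx' : x (k + 1) = ((x k).1, lamOpt A α (x k).1) := Prod.ext e1 e2
    obtain ⟨r1, r2⟩ := hrow _ hk (Fin.last n)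
    obtain ⟨r3, r4⟩ := hcol _ hk (Fin.last n)
    obtain ⟨r5, r6⟩ := hcen _ hk
    obtain ⟨s1, s2⟩ := hstep_m A hn α hα₁ hα₂ (x k) (x (k + 1)) hx' (hσ _) _ _ _ rfl rfl rfl
    rw [hFsum]
    set F0 := ∑ i : Fin n, ∑ j : Fin n, hFF A (x k) i.castSucc j.castSucc
    set F1 := ∑ i, hFF A (x k) i (Fin.last n)
    set F2 := ∑ j, hFF A (x k) (Fin.last n) j
    set D := hth A α (x k) - hth A α (x (k + 1)) with hD
    have w0 := sq_nonneg (√F0 - √(2 * α - 1))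
    have w1 := sq_nonneg (√F1 - √(1 - α))
    have w2 := sq_nonneg (√F2 - √(1 - α))
    have hD0 : 0 ≤ D := by linarith
    have t0 := hscal1 F0 (2 * α - 1) M D (by linarith) (by linarith) r6 (by linarith) (by linarith)
    have t1 := hscal1 F1 (1 - α) M D (by linarith) (by linarith) r4 (by linarith) (by linarith)
    have t2 := hscal1 F2 (1 - α) M D (by linarith) (by linarith) r2 (by linarith) (by linarith)
    have u0 := hscal2 F0 (2 * α - 1) mm hmm0 r5 hmm2
    have u1 := hscal2 F1 (1 - α) mm hmm0 r3 hmm3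
    have u2 := hscal2 F2 (1 - α) mm hmm0 r1 hmm3
    have hsD : 0 ≤ √M * √D := by positivity
    refine ⟨by linarith, ?_, ?_, ?_⟩
    · refine s2.trans ((add_le_add (add_le_add u0 u1) u2).trans ?_)
      rw [← add_div, ← add_div, div_mul_eq_mul_div]
      gcongr
      rw [hU]; linarith
    · rw [hU]; linarith
    · have a0 := abs_le.1 t0
      have a1 := abs_le.1 t1
      have a2 := abs_le.1 t2
      rw [hU, abs_le]
      constructor <;> linarith
  have hmod : ∀ k, k % (n + 2) < n + 1 ∨ k % (n + 2) = n + 1 := by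
    intro k
    have := Nat.mod_lt k (show 0 < n + 2 by omega)
    omega
  have hS : ∀ k, hth A α (x k) ≤ L := by
    intro k
    induction k with
    | zero => exact le_rfl
    | succ k ih =>
      rcases hmod k with h | h
      · exact (stepP k ih h).1.trans ih
      · exact (stepM k ih h).1.trans ih
  have hmono : ∀ k, hth A α (x (k + 1)) ≤ hth A α (x k) := by
    intro k
    rcases hmod k with h | h
    · exact (stepP k (hS k) h).1
    · exact (stepM k (hS k) h).1
  have hdist : ∀ k, dist (x k) (x (k + 1))
      ≤ U / mm * √(hth A α (x k) - hth A α (x (k + 1))) := by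
    intro k
    rcases hmod k with h | h
    · exact (stepP k (hS k) h).2.1
    · exact (stepM k (hS k) h).2.1
  obtain ⟨Λ, hΛ0, hΛ⟩ := hLip A hA R
  obtain ⟨K, hK0, hK⟩ := hPL A hA hA0 α R m1 hm1
  set c : ℝ := n + 1 with hc
  have hc1 : 1 ≤ c := by rw [hc]; simp
  have lipR : ∀ y w, hth A α y ≤ L → hth A α w ≤ L → ∀ l,
      |(∑ j, hFF A y l j) - ∑ j, hFF A w l j| ≤ c * (Λ * dist y w) := by
    intro y w hy hw l
    rw [← Finset.sum_sub_distrib]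
    refine (Finset.abs_sum_le_sum_abs _ _).trans ?_
    refine (Finset.sum_le_sum fun j _ => hΛ y w (hR y hy) (hR w hw) l j).trans ?_
    simp [hc]
  have lipC : ∀ y w, hth A α y ≤ L → hth A α w ≤ L → ∀ l,
      |(∑ i, hFF A y i l) - ∑ i, hFF A w i l| ≤ c * (Λ * dist y w) := by
    intro y w hy hw l
    rw [← Finset.sum_sub_distrib]
    refine (Finset.abs_sum_le_sum_abs _ _).trans ?_
    refine (Finset.sum_le_sum fun j _ => hΛ y w (hR y hy) (hR w hw) j l).trans ?_
    simp [hc]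
  have lipT : ∀ y w, hth A α y ≤ L → hth A α w ≤ L →
      |(∑ i, ∑ j, hFF A y i j) - ∑ i, ∑ j, hFF A w i j| ≤ c * (c * (Λ * dist y w)) := by
    intro y w hy hw
    rw [← Finset.sum_sub_distrib]
    refine (Finset.abs_sum_le_sum_abs _ _).trans ?_
    refine (Finset.sum_le_sum fun l _ => lipR y w hy hw l).trans ?_
    simp [hc]
  have hc0 : 0 ≤ c := by linarith
  clear_value c U M mm
  set V := 2 * c * (c * Λ) * (U / mm) + U with hV
  have hV0 : 0 ≤ V := by positivity
  clear_value V
  have hcyc : ∀ k, k % (n + 2) = 0 → ∀ y, hth A α (x k) - hth A α y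
      ≤ (K * (V ^ 2 * (n + 2 : ℕ))) * (hth A α (x k) - hth A α (x (k + (n + 2)))) := by
    intro k hk y
    have hanti : Antitone (fun k => hth A α (x k)) := antitone_nat_of_succ_le hmono
    have hdec : 0 ≤ hth A α (x k) - hth A α (x (k + (n + 2))) :=
      sub_nonneg.2 (hanti (by omega))
    by_cases hy : hth A α y ≤ L
    swap
    · have := hS k
      have : 0 ≤ (K * (V ^ 2 * (n + 2 : ℕ))) * (hth A α (x k) - hth A α (x (k + (n + 2)))) := by
        positivity
      linarith
    set d : ℕ → ℝ := fun j => √(hth A α (x (k + j)) - hth A α (x (k + j + 1))) with hd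
    have hd0 : ∀ j, 0 ≤ d j := fun j => Real.sqrt_nonneg _
    set S := ∑ j ∈ Finset.range (n + 2), d j with hSd
    have hS0 : 0 ≤ S := Finset.sum_nonneg fun j _ => hd0 j
    have hdS : ∀ j, j < n + 2 → d j ≤ S := fun j hj =>
      Finset.single_le_sum (fun j _ => hd0 j) (Finset.mem_range.2 hj)
    have hS2 : S ^ 2 ≤ (n + 2 : ℕ) * (hth A α (x k) - hth A α (x (k + (n + 2)))) := by
      have h1 := sq_sum_le_card_mul_sum_sq (s := Finset.range (n + 2)) (f := d)
      have h2 : ∑ j ∈ Finset.range (n + 2), d j ^ 2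
          = hth A α (x k) - hth A α (x (k + (n + 2))) := by
        have h3 := Finset.sum_range_sub' (fun j => hth A α (x (k + j))) (n + 2)
        simp only [add_zero] at h3
        rw [← h3]
        refine Finset.sum_congr rfl fun j _ => ?_
        exact Real.sq_sqrt (sub_nonneg.2 (hmono _))
      rw [h2, Finset.card_range] at h1
      exact h1
    have hdd : ∀ j, j ≤ n + 2 → dist (x k) (x (k + j)) ≤ U / mm * S := by
      intro j hj
      have h1 := dist_le_range_sum_dist (fun i => x (k + i)) j
      simp only [add_zero] at h1
      refine h1.trans ?_
      rw [hSd, Finset.mul_sum]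
      refine (Finset.sum_le_sum fun i _ => hdist (k + i)).trans ?_
      refine Finset.sum_le_sum_of_subset_of_nonneg (Finset.range_mono hj) ?_
      intro i _ _
      exact mul_nonneg (by positivity) (hd0 i)
    have hmodj : ∀ j, j < n + 2 → (k + j) % (n + 2) = j := by
      intro j hj
      rw [Nat.add_mod, hk, zero_add, Nat.mod_mod, Nat.mod_eq_of_lt hj]
    clear_value S
    have hUm : 0 ≤ U / mm := div_nonneg hU0 hmm0.le
    have hcΛ : 0 ≤ c * (Λ * (U / mm * S)) := by positivity
    have hcΛ2 : c * (Λ * (U / mm * S)) ≤ c * (c * (Λ * (U / mm * S))) :=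
      le_mul_of_one_le_left hcΛ hc1
    have hVS : V * S = 2 * (c * (c * (Λ * (U / mm * S)))) + U * S := by rw [hV]; ring
    have hUd : ∀ j, j < n + 2 → U * d j ≤ U * S := fun j hj =>
      mul_le_mul_of_nonneg_left (hdS j hj) hU0
    have hcd : ∀ j, j ≤ n + 2 → c * (Λ * dist (x k) (x (k + j))) ≤ c * (Λ * (U / mm * S)) := by
      intro j hj
      have := hdd j hj
      gcongr
    have main := hK (x k) y (hR _ (hS k)) (hR _ hy) (hmM _ (hR _ (hS k))).1 (V * S)
      (by positivity) ?_ ?_ ?_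
    · calc _ ≤ K * (V * S) ^ 2 := main
        _ = K * (V ^ 2 * S ^ 2) := by ring
        _ ≤ K * (V ^ 2 * ((n + 2 : ℕ) * (hth A α (x k) - hth A α (x (k + (n + 2)))))) := by
          gcongr
        _ = _ := by ring
    · intro i
      have hi : (i : ℕ) < n + 2 := by omega
      have hm := hmodj i hi
      have hlt : (k + i) % (n + 2) < n + 1 := by omega
      have h1 := (stepP (k + i) (hS _) hlt).2.2
      have hfin : (⟨(k + i) % (n + 2), hlt⟩ : Fin (n + 1)) = i.castSucc := by
        ext; simpa using hm
      rw [hfin] at h1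
      have h2 := lipR (x k) (x (k + i)) (hS _) (hS _) i.castSucc
      have h3 := lipC (x k) (x (k + i)) (hS _) (hS _) i.castSucc
      have h4 := hcd i hi.le
      have h5 := hUd i hi
      change _ ≤ U * d i at h1
      have h1 := abs_le.1 (h1.trans h5)
      have h2 := abs_le.1 (h2.trans h4)
      have h3 := abs_le.1 (h3.trans h4)
      rw [hVS, abs_le]
      constructor <;> linarith
    · have hi : n + 1 < n + 2 := by omega
      have h1 := (stepM (k + (n + 1)) (hS _) (hmodj _ hi)).2.2.1
      have h2 := lipR (x k) (x (k + (n + 1))) (hS _) (hS _) (Fin.last n)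
      have h4 := hcd _ hi.le
      have h5 := hUd _ hi
      change _ ≤ U * d (n + 1) at h1
      have h1 := abs_le.1 (h1.trans h5)
      have h2 := abs_le.1 (h2.trans h4)
      rw [hVS, abs_le]
      constructor <;> linarith
    · have hi : n + 1 < n + 2 := by omega
      have h1 := (stepM (k + (n + 1)) (hS _) (hmodj _ hi)).2.2.2
      have h2 := lipT (x k) (x (k + (n + 1))) (hS _) (hS _)
      have h4 := mul_le_mul_of_nonneg_left (hcd _ hi.le) (show 0 ≤ c by linarith)
      have h5 := hUd _ hi
      change _ ≤ U * d (n + 1) at h1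
      have h1 := abs_le.1 (h1.trans h5)
      have h2 := abs_le.1 (h2.trans h4)
      rw [hVS, abs_le]
      constructor <;> linarith
  obtain ⟨xb, hmin, hlim, C, r, hr0, hr1, hC⟩ := hots_abstract (n + 2) (by omega) x (hth A α)
    (hth_cont A α) (U / mm) _ (by positivity) hmono hdist hcyc
  exact ⟨xb.1, xb.2, fun q μ a b => hmin (q, (μ, a, b)), hlim, C, r, hr0, hr1, hC⟩
end

section
/- Let A be an n×n real matrix with all entries positive, and let L, U be n×n real matrices with 0 ≤ L_{ij} ≤ U_{ij} and U_{ij} > 0 for all i, j. For p ∈ ℝⁿ define the truncated scaling dual θ(p, η, ζ) = Σ_{i,j=1}^n A_{ij} e^{p_i − p_j + η_{ij} − ζ_{ij}} − Σ_{i,j=1}^n L_{ij} η_{ij} + Σ_{i,j=1}^n U_{ij} ζ_{ij}. Then for every fixed p ∈ ℝⁿ, the pair (η, ζ) defined by e^{η_{ij}} = max(L_{ij}/(A_{ij} e^{p_i − p_j}), 1) and e^{−ζ_{ij}} = min(U_{ij}/(A_{ij} e^{p_i − p_j}), 1) is a global minimizer of (η, ζ) ↦ θ(p, η, ζ) over the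 set { (η, ζ) : η_{ij} ≥ 0, ζ_{ij} ≥ 0 for all i, j }. -/
open BigOperators

/-- The truncated scaling dual function
`θ(p, η, ζ) = Σ A_{ij} e^{p_i−p_j+η_{ij}−ζ_{ij}} − Σ L_{ij} η_{ij} + Σ U_{ij} ζ_{ij}`. -/
noncomputable def truncDual {n : ℕ} (A L U : Matrix (Fin n) (Fin n) ℝ)
    (p : Fin n → ℝ) (η ζ : Matrix (Fin n) (Fin n) ℝ) : ℝ :=
  (∑ i, ∑ j, A i j * Real.exp (p i - p j + η i j - ζ i j))
    - (∑ i, ∑ j, L i j * η i j) + ∑ i, ∑ j, U i j * ζ i j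

theorem scalar_aux (c l u x y : ℝ) (hc : 0 < c) (hlu : l ≤ u)
    (hu : 0 < u) (hx : 0 ≤ x) (hy : 0 ≤ y) :
    c * Real.exp (Real.log (max (l / c) 1) - -Real.log (min (u / c) 1))
      - l * Real.log (max (l / c) 1) + u * -Real.log (min (u / c) 1)
    ≤ c * Real.exp (x - y) - l * x + u * y := by
  obtain ⟨a, ha⟩ : ∃ a, a = Real.log (max (l / c) 1) := ⟨_, rfl⟩
  obtain ⟨b, hb⟩ : ∃ b, b = -Real.log (min (u / c) 1) := ⟨_, rfl⟩
  rw [← ha, ← hb]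
  have key : ∃ X, X = c * Real.exp (a - b) ∧ l ≤ X ∧ X ≤ u ∧ (X - l) * a = 0 ∧
      (u - X) * b = 0 := by
    refine ⟨_, rfl, ?_⟩
    rcases lt_or_ge c l with h | h
    · have h1 : 1 ≤ l / c := by rw [le_div_iff₀ hc]; linarith
      have h2 : 1 ≤ u / c := by rw [le_div_iff₀ hc]; linarith
      rw [max_eq_left h1] at ha
      rw [min_eq_right h2, Real.log_one, neg_zero] at hb
      have hX : c * Real.exp (a - b) = l := by
        rw [ha, hb, sub_zero, Real.exp_log (by linarith)]
        field_simp
      rw [hX, hb]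
      refine ⟨le_rfl, hlu, by ring, by ring⟩
    · have h1 : l / c ≤ 1 := by rw [div_le_iff₀ hc]; linarith
      rw [max_eq_right h1, Real.log_one] at ha
      rcases lt_or_ge c u with h' | h'
      · have h2 : 1 ≤ u / c := by rw [le_div_iff₀ hc]; linarith
        rw [min_eq_right h2, Real.log_one, neg_zero] at hb
        subst ha hb
        simp [h, h'.le]
      · have h2 : u / c ≤ 1 := by rw [div_le_iff₀ hc]; linarith
        rw [min_eq_left h2] at hb
        have hX : c * Real.exp (a - b) = u := by
          rw [ha, hb, zero_sub, neg_neg, Real.exp_log (by positivity)]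
          field_simp
        rw [hX, ha]
        refine ⟨hlu, le_rfl, by ring, by ring⟩
  obtain ⟨X, hX, h1, h2, h3, h4⟩ := key
  have h5 : c * Real.exp (x - y) = X * Real.exp ((x - y) - (a - b)) := by
    rw [hX, mul_assoc, ← Real.exp_add]
    congr 2; ring
  have hX0 : 0 ≤ X := by rw [hX]; positivity
  have h6 := mul_le_mul_of_nonneg_left (Real.add_one_le_exp ((x - y) - (a - b))) hX0
  rw [h5, ← hX]
  nlinarith [mul_nonneg (sub_nonneg.2 h1) hx, mul_nonneg (sub_nonneg.2 h2) hy]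

/-- For fixed `p`, the multipliers given by `e^{η_{ij}} = max(L_{ij}/(A_{ij}e^{p_i−p_j}), 1)`
and `e^{−ζ_{ij}} = min(U_{ij}/(A_{ij}e^{p_i−p_j}), 1)` minimize `θ(p, ·, ·)` over the
nonnegative multipliers. -/
theorem truncDual_multiplier_minimizer {n : ℕ} (A L U : Matrix (Fin n) (Fin n) ℝ)
    (hA : ∀ i j, 0 < A i j) (hL : ∀ i j, 0 ≤ L i j) (hLU : ∀ i j, L i j ≤ U i j)
    (hU : ∀ i j, 0 < U i j) (p : Fin n → ℝ) :
    (∀ i j, 0 ≤ Real.log (max (L i j / (A i j * Real.exp (p i - p j))) 1)) ∧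
    (∀ i j, 0 ≤ -Real.log (min (U i j / (A i j * Real.exp (p i - p j))) 1)) ∧
    ∀ η ζ : Matrix (Fin n) (Fin n) ℝ, (∀ i j, 0 ≤ η i j) → (∀ i j, 0 ≤ ζ i j) →
      truncDual A L U p
          (fun i j => Real.log (max (L i j / (A i j * Real.exp (p i - p j))) 1))
          (fun i j => -Real.log (min (U i j / (A i j * Real.exp (p i - p j))) 1)) ≤
        truncDual A L U p η ζ := by
  refine ⟨fun i j => Real.log_nonneg (le_max_right _ _), fun i j => ?_, ?_⟩
  · have hpos : 0 < U i j / (A i j * Real.exp (p i - p j)) :=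
      div_pos (hU i j) (mul_pos (hA i j) (Real.exp_pos _))
    exact neg_nonneg.2 (Real.log_nonpos (le_min hpos.le zero_le_one) (min_le_right _ _))
  · intro η ζ hη hζ
    unfold truncDual
    simp only [← Finset.sum_sub_distrib, ← Finset.sum_add_distrib]
    refine Finset.sum_le_sum fun i _ => Finset.sum_le_sum fun j _ => ?_
    have h := scalar_aux (A i j * Real.exp (p i - p j)) (L i j) (U i j) (η i j) (ζ i j)
      (mul_pos (hA i j) (Real.exp_pos _)) (hLU i j) (hU i j) (hη i j) (hζ i j)
    rw [mul_assoc, mul_assoc, ← Real.exp_add, ← Real.exp_add, ← add_sub_assoc,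
      ← add_sub_assoc] at h
    exact h
end
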